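/- Let b be a basic D-sequence with ratios bounded by L (q_n ≤ L for all n ≥ 1), let (x_n) be a sequence of integers with x_n ≠ 0 for infinitely many n and such that for every m there exists N with b_m dividing x_n for all n ≥ N (i.e. x_n → 0 in the b-adic topology λ_b). Then there exists a subsequence c = (b_{n_j + 1})_{j≥1} of b such that c_{j}/c_{j+1} ≤ 1/2^j for all j (in particular c_{j+1}/c_j → ∞) and such that for every j the distance from the real number x_{m_j} / b_{n_j+1} to the nearest integer exceeds 1/(4L) for suitable indices m_j; in particular the sequence (x_n) does not converge to 0 uniformly in the sense that sup_j ‖x_{m_j}/b_{n_j+1} mod ℤ‖ > 1/(4L). -/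

import Mathlib

/-- A `D`-sequence: `b 0 = 1`, consecutive terms are distinct, and each term
divides the next. -/
def IsDSequence (b : ℕ → ℕ) : Prop :=
  b 0 = 1 ∧ (∀ n, b n ≠ b (n + 1)) ∧ ∀ n, b n ∣ b (n + 1)

/-- For a D-sequence, `q (j+1) = b (j+1) / b j`. -/
def qRatio (b : ℕ → ℕ) (j : ℕ) : ℕ := b (j + 1) / b j

/-!
Let `n` be the last index with `b n ∣ a`, for an integer `a ≠ 0`. Then the class of `a / b (n + 1)`
in `ℝ / ℤ` is a nonzero element killed by `q = b (n + 1) / b n`, so its norm is at least `1 / q`.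
Since `x` tends to `0` in the `b`-adic topology without vanishing eventually, infinitely many
indices `n` arise in this way from terms of `x`. As `b` at least doubles at each step, a
sufficiently sparse sequence of such indices gives the required growth.
-/

open Filter

theorem le_nsmul_norm_of_nsmul_eq_zero {p : ℝ} [Fact (0 < p)] {u : AddCircle p} {n : ℕ}
    (hn : 0 < n) (hnu : n • u = 0) (hu : u ≠ 0) : p ≤ n • ‖u‖ :=
  calc
    p ≤ addOrderOf u • ‖u‖ := AddCircle.le_add_order_smul_norm_of_isOfFinAddOrder
      (isOfFinAddOrder_iff_nsmul_eq_zero.mpr ⟨n, hn, hnu⟩) hu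
    _ ≤ n • ‖u‖ := nsmul_le_nsmul_left (norm_nonneg u) (addOrderOf_le_of_nsmul_eq_zero hn hnu)

theorem coe_intCast_div_natCast_eq_zero_iff {a : ℤ} {n : ℕ} (hn : n ≠ 0) :
    ((a / n : ℝ) : AddCircle (1 : ℝ)) = 0 ↔ (n : ℤ) ∣ a := by
  have hn' : (n : ℝ) ≠ 0 := Nat.cast_ne_zero.mpr hn
  simp only [AddCircle.coe_eq_zero_iff, zsmul_one, eq_div_iff hn', dvd_def, mul_comm (n : ℤ)]
  norm_cast
  simp only [eq_comm]

theorem one_div_le_norm_coe_intCast_div {a : ℤ} {d q : ℕ} (hq : q ≠ 0) (hda : (d : ℤ) ∣ a)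
    (hdqa : ¬ ((d * q : ℕ) : ℤ) ∣ a) :
    1 / (q : ℝ) ≤ ‖((a / (d * q : ℕ) : ℝ) : AddCircle (1 : ℝ))‖ := by
  have hd : d ≠ 0 := by
    rintro rfl
    exact hdqa (by simpa using hda)
  have hne : ((a / (d * q : ℕ) : ℝ) : AddCircle (1 : ℝ)) ≠ 0 := by
    rwa [Ne, coe_intCast_div_natCast_eq_zero_iff (mul_ne_zero hd hq)]
  have hmul : q • ((a / (d * q : ℕ) : ℝ) : AddCircle (1 : ℝ)) = 0 := by
    have hreduce : q • (a / (d * q : ℕ) : ℝ) = a / d := by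
      rw [nsmul_eq_mul]
      push_cast
      field_simp
    rwa [← AddCircle.coe_nsmul, hreduce, coe_intCast_div_natCast_eq_zero_iff hd]
  have hle := le_nsmul_norm_of_nsmul_eq_zero (Nat.pos_of_ne_zero hq) hmul hne
  rwa [div_le_iff₀' (by positivity), ← nsmul_eq_mul]

theorem one_div_four_mul_lt_one_div {q L : ℕ} (hq : 0 < q) (hqL : q ≤ L) :
    1 / (4 * L : ℝ) < 1 / q := by
  have hq' : (0 : ℝ) < q := Nat.cast_pos.mpr hq
  have hqL' : (q : ℝ) ≤ L := Nat.cast_le.mpr hqL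
  exact one_div_lt_one_div_of_lt hq' (by linarith)

namespace IsDSequence

variable {b : ℕ → ℕ}

theorem ne_zero (hb : IsDSequence b) (n : ℕ) : b n ≠ 0 := by
  intro hn
  have hsucc : b (n + 1) = 0 := zero_dvd_iff.mp (hn ▸ hb.2.2 n)
  exact hb.2.1 n (hn.trans hsucc.symm)

theorem dvd_of_le (hb : IsDSequence b) {m n : ℕ} (hmn : m ≤ n) : b m ∣ b n :=
  Nat.rel_of_forall_rel_succ_of_le (· ∣ ·) hb.2.2 hmn

theorem mul_qRatio (hb : IsDSequence b) (n : ℕ) : b n * qRatio b n = b (n + 1) :=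
  Nat.mul_div_cancel' (hb.2.2 n)

theorem two_le_qRatio (hb : IsDSequence b) (n : ℕ) : 2 ≤ qRatio b n := by
  have hmul := hb.mul_qRatio n
  have hzero : qRatio b n ≠ 0 := right_ne_zero_of_mul (hmul ▸ hb.ne_zero (n + 1))
  have hone : qRatio b n ≠ 1 := fun h => hb.2.1 n (by rw [← hmul, h, mul_one])
  omega

theorem mul_two_pow_le (hb : IsDSequence b) (m k : ℕ) : b m * 2 ^ k ≤ b (m + k) := by
  induction k with
  | zero => simp
  | succ k ih =>
    calc
      b m * 2 ^ (k + 1) = b m * 2 ^ k * 2 := by rw [pow_succ, mul_assoc]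
      _ ≤ b (m + k) * qRatio b (m + k) := Nat.mul_le_mul ih (hb.two_le_qRatio _)
      _ = b (m + (k + 1)) := hb.mul_qRatio (m + k)

theorem div_le_one_div_two_pow (hb : IsDSequence b) {m n k : ℕ} (hmn : m + k ≤ n) :
    (b m : ℝ) / b n ≤ 1 / 2 ^ k := by
  have hle : b m * 2 ^ k ≤ b n :=
    (hb.mul_two_pow_le m k).trans
      (Nat.le_of_dvd (Nat.pos_of_ne_zero (hb.ne_zero n)) (hb.dvd_of_le hmn))
  have hpos : (0 : ℝ) < b n := Nat.cast_pos.mpr (Nat.pos_of_ne_zero (hb.ne_zero n))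
  rw [div_le_div_iff₀ hpos (by positivity), one_mul]
  exact_mod_cast hle

theorem exists_not_dvd (hb : IsDSequence b) {a : ℤ} (ha : a ≠ 0) : ∃ n, ¬ (b n : ℤ) ∣ a := by
  refine ⟨a.natAbs, fun hdvd => ?_⟩
  have hle : b a.natAbs ≤ a.natAbs :=
    Nat.le_of_dvd (Int.natAbs_pos.mpr ha) (Int.natCast_dvd.mp hdvd)
  have hlt : a.natAbs < b a.natAbs :=
    calc
      a.natAbs < 2 ^ a.natAbs := Nat.lt_two_pow_self
      _ ≤ b a.natAbs := by simpa [hb.1] using hb.mul_two_pow_le 0 a.natAbs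
  exact hle.not_gt hlt

theorem exists_dvd_and_not_dvd_succ (hb : IsDSequence b) {a : ℤ} (ha : a ≠ 0) {k : ℕ}
    (hk : (b k : ℤ) ∣ a) : ∃ n ≥ k, (b n : ℤ) ∣ a ∧ ¬ (b (n + 1) : ℤ) ∣ a := by
  by_contra! hstep
  have hall : ∀ n ≥ k, (b n : ℤ) ∣ a := Nat.le_induction hk hstep
  obtain ⟨n, hn⟩ := hb.exists_not_dvd ha
  have hdvd : (b n : ℤ) ∣ b (max n k) :=
    Int.natCast_dvd_natCast.mpr (hb.dvd_of_le (le_max_left n k))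
  exact hn (hdvd.trans (hall _ (le_max_right n k)))

theorem frequently_dvd_and_not_dvd_succ (hb : IsDSequence b) {x : ℕ → ℤ}
    (hx : {n | x n ≠ 0}.Infinite) (hconv : ∀ m, ∃ N, ∀ n ≥ N, (b m : ℤ) ∣ x n) :
    ∃ᶠ n in atTop, ∃ m, (b n : ℤ) ∣ x m ∧ ¬ (b (n + 1) : ℤ) ∣ x m := by
  refine frequently_atTop.mpr fun k => ?_
  obtain ⟨N, hN⟩ := hconv k
  obtain ⟨m, hm, hNm⟩ := hx.exists_gt N
  obtain ⟨n, hkn, hn⟩ := hb.exists_dvd_and_not_dvd_succ hm (hN m hNm.le)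
  exact ⟨n, hkn, m, hn⟩

theorem one_div_qRatio_le_norm (hb : IsDSequence b) {a : ℤ} {n : ℕ} (hn : (b n : ℤ) ∣ a)
    (hsucc : ¬ (b (n + 1) : ℤ) ∣ a) :
    1 / (qRatio b n : ℝ) ≤ ‖((a / b (n + 1) : ℝ) : AddCircle (1 : ℝ))‖ := by
  have hq : qRatio b n ≠ 0 := (zero_lt_two.trans_le (hb.two_le_qRatio n)).ne'
  rw [← hb.mul_qRatio n] at hsucc ⊢
  exact one_div_le_norm_coe_intCast_div hq hn hsucc

end IsDSequence

theorem exists_strictMono_add_le_of_frequently {P : ℕ → Prop} (hP : ∃ᶠ n in atTop, P n) :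
    ∃ φ : ℕ → ℕ, StrictMono φ ∧ (∀ j, φ j + j ≤ φ (j + 1)) ∧ ∀ j, P (φ j) := by
  obtain ⟨ψ, hψ, hPψ⟩ := extraction_of_frequently_atTop hP
  refine ⟨fun j => ψ (2 ^ j), hψ.comp (pow_right_strictMono₀ one_lt_two), fun j => ?_,
    fun j => hPψ _⟩
  calc
    ψ (2 ^ j) + j ≤ ψ (2 ^ j) + 2 ^ j := Nat.add_le_add_left Nat.lt_two_pow_self.le _
    _ ≤ ψ (2 ^ j + 2 ^ j) := by rw [add_comm]; exact hψ.add_le_nat _ _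
    _ = ψ (2 ^ (j + 1)) := by rw [pow_succ, mul_two]

theorem killing_subsequence_general {b : ℕ → ℕ} (hb : IsDSequence b) {x : ℕ → ℤ}
    (hx : {n | x n ≠ 0}.Infinite) (hconv : ∀ m, ∃ N, ∀ n ≥ N, (b m : ℤ) ∣ x n) :
    ∃ nseq mseq : ℕ → ℕ, StrictMono nseq ∧
      (∀ j, (b (nseq j + 1) : ℝ) / b (nseq (j + 1) + 1) ≤ 1 / 2 ^ j) ∧
      ∀ j, 1 / (qRatio b (nseq j) : ℝ) ≤
        ‖((x (mseq j) / b (nseq j + 1) : ℝ) : AddCircle (1 : ℝ))‖ := by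
  obtain ⟨nseq, hmono, hgap, hdvd⟩ :=
    exists_strictMono_add_le_of_frequently (hb.frequently_dvd_and_not_dvd_succ hx hconv)
  choose mseq hn hsucc using hdvd
  have hgap_succ (j : ℕ) : nseq j + 1 + j ≤ nseq (j + 1) + 1 := by have := hgap j; omega
  exact ⟨nseq, mseq, hmono, fun j => hb.div_le_one_div_two_pow (hgap_succ j),
    fun j => hb.one_div_qRatio_le_norm (hn j) (hsucc j)⟩

theorem killing_subsequence (b : ℕ → ℕ) (hb : IsDSequence b)
    (hbasic : ∀ j, (qRatio b j).Prime) (L : ℕ) (hL : ∀ j, qRatio b j ≤ L)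
    (x : ℕ → ℤ)
    (hnq : {n : ℕ | x n ≠ 0}.Infinite)
    (hconv : ∀ m : ℕ, ∃ N : ℕ, ∀ n ≥ N, (b m : ℤ) ∣ x n) :
    ∃ nseq mseq : ℕ → ℕ, StrictMono nseq ∧
      (∀ j, (b (nseq j + 1) : ℝ) / (b (nseq (j + 1) + 1) : ℝ) ≤ 1 / 2 ^ j) ∧
      (∀ j, ‖(((x (mseq j) : ℝ) / (b (nseq j + 1) : ℝ) : ℝ) : AddCircle (1 : ℝ))‖ >
        1 / (4 * L)) := by
  obtain ⟨nseq, mseq, hmono, hgrow, hnorm⟩ := killing_subsequence_general hb hnq hconv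
  exact ⟨nseq, mseq, hmono, hgrow, fun j =>
    (one_div_four_mul_lt_one_div (zero_lt_two.trans_le (hb.two_le_qRatio _)) (hL _)).trans_le
      (hnorm j)⟩
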